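/- Let a, b, c be integers with a > 0, c > 0, and suppose d := ac − b² is positive, squarefree, and d mod 8 ≠ 7. Then the binary quadratic form q(x,y) = ax² + 2bxy + cy² is represented by the sum of four squares: there exist vectors u, v ∈ ℤ⁴ with u·u = a, u·v = b, and v·v = c. -/

import Mathlib

open scoped Quaternion NumberTheorySymbols

/-- The symmetric `3 × 3` integer matrix with rows `(a, r, s)`, `(r, b, t)`, `(s, t, c)` is the
Gram matrix of three vectors of `ℤ³`. -/
def IsGramThree (a b c r s t : ℤ) : Prop :=
  ∃ u v w : Fin 3 → ℤ, u ⬝ᵥ u = a ∧ v ⬝ᵥ v = b ∧ w ⬝ᵥ w = c ∧ u ⬝ᵥ v = r ∧ u ⬝ᵥ w = s ∧ v ⬝ᵥ w = t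

namespace IsGramThree

variable {a b c r s t : ℤ}

theorem swap_left (h : IsGramThree b a c r t s) : IsGramThree a b c r s t := by
  obtain ⟨u, v, w, h₁, h₂, h₃, h₄, h₅, h₆⟩ := h
  exact ⟨v, u, w, h₂, h₁, h₃, dotProduct_comm v u ▸ h₄, h₆, h₅⟩

theorem swap_right (h : IsGramThree a c b s r t) : IsGramThree a b c r s t := by
  obtain ⟨u, v, w, h₁, h₂, h₃, h₄, h₅, h₆⟩ := h
  exact ⟨u, w, v, h₁, h₃, h₂, h₅, h₄, dotProduct_comm w v ▸ h₆⟩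

theorem shear_left (k : ℤ)
    (h : IsGramThree a (b + 2 * k * r + k ^ 2 * a) c (r + k * a) s (t + k * s)) :
    IsGramThree a b c r s t := by
  obtain ⟨u, v, w, h₁, h₂, h₃, h₄, h₅, h₆⟩ := h
  refine ⟨u, v - k • u, w, h₁, ?_, h₃, ?_, h₅, ?_⟩ <;>
    simp only [sub_dotProduct, dotProduct_sub, smul_dotProduct, dotProduct_smul, smul_eq_mul,
      dotProduct_comm v u, h₁, h₂, h₄, h₅, h₆] <;> ring

theorem shear_right (k : ℤ)
    (h : IsGramThree a b (c + 2 * k * t + k ^ 2 * b) r (s + k * r) (t + k * b)) :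
    IsGramThree a b c r s t := by
  obtain ⟨u, v, w, h₁, h₂, h₃, h₄, h₅, h₆⟩ := h
  refine ⟨u, v, w - k • v, h₁, h₂, ?_, h₄, ?_, ?_⟩ <;>
    simp only [sub_dotProduct, dotProduct_sub, smul_dotProduct, dotProduct_smul, smul_eq_mul,
      dotProduct_comm w v, h₂, h₃, h₄, h₅, h₆] <;> ring

end IsGramThree

theorem Int.exists_two_mul_abs_add_mul_le (x : ℤ) {y : ℤ} (hy : 0 < y) :
    ∃ k : ℤ, 2 * |x + k * y| ≤ y := by
  refine ⟨-((2 * x + y) / (2 * y)), ?_⟩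
  have h₁ := Int.emod_add_mul_ediv (2 * x + y) (2 * y)
  have h₂ := Int.emod_nonneg (2 * x + y) (b := 2 * y) (by omega)
  have h₃ := Int.emod_lt_of_pos (2 * x + y) (b := 2 * y) (by omega)
  have h₄ : 2 * (x + -((2 * x + y) / (2 * y)) * y) = (2 * x + y) % (2 * y) - y := by linarith
  rw [← abs_two (α := ℤ), ← abs_mul, abs_two, h₄, abs_le]
  constructor <;> linarith

/-- A positive definite ternary form of determinant one that is reduced is, up to a further
change of basis, the sum of three squares. -/
theorem IsGramThree.of_reduced {a b c r s t : ℤ} (ha : 0 < a) (hA : 0 < a * b - r ^ 2)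
    (hdet : a * b * c + 2 * r * s * t - a * t ^ 2 - b * s ^ 2 - c * r ^ 2 = 1)
    (hr : 2 * |r| ≤ a) (hab : a ≤ b) (ht : 2 * |a * t - r * s| ≤ a * b - r ^ 2)
    (hAC : a * b - r ^ 2 ≤ a * c - s ^ 2) : IsGramThree a b c r s t := by
  have hB : (a * b - r ^ 2) * (a * c - s ^ 2) - (a * t - r * s) ^ 2 = a := by
    linear_combination a * hdet
  generalize hAd : a * b - r ^ 2 = A at *
  generalize hBd : a * t - r * s = B at *
  generalize hCd : a * c - s ^ 2 = C at *
  have hr2 : 4 * r ^ 2 ≤ a ^ 2 := by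
    rw [← sq_abs r]; nlinarith [abs_nonneg r]
  have hB2 : 4 * B ^ 2 ≤ A ^ 2 := by
    rw [← sq_abs B]; nlinarith [abs_nonneg B]
  have h₁ : 3 * A ^ 2 ≤ 4 * a := by nlinarith
  have h₂ : 3 * a ^ 2 ≤ 4 * A := by nlinarith
  have ha1 : a = 1 := by
    by_contra hne
    have : 2 ≤ a := by omega
    nlinarith
  have hA1 : A = 1 := by
    by_contra hne
    have : 2 ≤ A := by omega
    nlinarith
  subst ha1 hA1
  obtain rfl : r = 0 := by rw [← abs_eq_zero]; have := abs_nonneg r; omega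
  obtain rfl : B = 0 := by rw [← abs_eq_zero]; have := abs_nonneg B; omega
  obtain rfl : b = 1 := by linarith
  obtain rfl : t = 0 := by linarith
  obtain rfl : c = 1 + s ^ 2 := by linarith
  refine ⟨![1, 0, 0], ![0, 1, 0], ![s, 0, 1], ?_⟩
  simp [dotProduct, Fin.sum_univ_three]
  ring

/-- A positive definite integral ternary form of determinant one is equivalent to the sum of three
squares. -/
theorem IsGramThree.of_det_eq_one (a b c r s t : ℤ) (ha : 0 < a) (hA : 0 < a * b - r ^ 2)
    (hdet : a * b * c + 2 * r * s * t - a * t ^ 2 - b * s ^ 2 - c * r ^ 2 = 1) :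
    IsGramThree a b c r s t := by
  obtain ⟨k, hk⟩ := Int.exists_two_mul_abs_add_mul_le r ha
  obtain ⟨l, hl⟩ := Int.exists_two_mul_abs_add_mul_le
    (a * (t + k * s) - (r + k * a) * s) hA
  apply IsGramThree.shear_left k
  apply IsGramThree.shear_right l
  set b' := b + 2 * k * r + k ^ 2 * a with hb'
  set r' := r + k * a with hr'
  set t' := t + k * s + l * b' with ht'
  set s' := s + l * r' with hs'
  set c' := c + 2 * l * (t + k * s) + l ^ 2 * b' with hc'
  have hA' : a * b' - r' ^ 2 = a * b - r ^ 2 := by rw [hb', hr']; ring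
  have hB' : a * t' - r' * s' = a * (t + k * s) - r' * s + l * (a * b - r ^ 2) := by
    rw [← hA', ht', hs']; ring
  have hdet' :
      a * b' * c' + 2 * r' * s' * t' - a * t' ^ 2 - b' * s' ^ 2 - c' * r' ^ 2 = 1 := by
    rw [← hdet, hc', hs', ht', hr', hb']; ring
  rw [← hB', ← hA'] at hl
  rw [← hA'] at hA
  have hb'0 : 0 < b' := by nlinarith [sq_nonneg r']
  have hC0 : 0 < a * c' - s' ^ 2 := by
    have : (a * b' - r' ^ 2) * (a * c' - s' ^ 2) - (a * t' - r' * s') ^ 2 = a := by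
      linear_combination a * hdet'
    nlinarith [sq_nonneg (a * t' - r' * s')]
  by_cases hab : a ≤ b'
  · by_cases hAC : a * b' - r' ^ 2 ≤ a * c' - s' ^ 2
    · exact IsGramThree.of_reduced ha hA hdet' hk hab hl hAC
    · have hlt : (a * c' - s' ^ 2).toNat < (a * b - r ^ 2).toNat :=
        (Int.toNat_lt_toNat (by linarith)).2 (by linarith)
      exact IsGramThree.swap_right <| IsGramThree.of_det_eq_one a c' b' s' r' t' ha hC0 (by linarith)
  · have hlt : b'.toNat < a.toNat := (Int.toNat_lt_toNat ha).2 (by linarith)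
    exact IsGramThree.swap_left <| IsGramThree.of_det_eq_one b' a c' r' t' s' hb'0
      (by linarith) (by linarith)
termination_by (a.toNat, (a * b - r ^ 2).toNat)
decreasing_by
  · exact Prod.Lex.right _ hlt
  · exact Prod.Lex.left _ _ hlt

/-- If `-b` is a square modulo `b * d - 1`, then `d` is a sum of three squares. -/
theorem Int.exists_sum_three_squares_of_dvd {b d q x : ℤ} (hb : 0 < b) (hq : 0 < q)
    (hbd : b * d = q + 1) (hx : q ∣ x ^ 2 + b) : ∃ y z w : ℤ, y ^ 2 + z ^ 2 + w ^ 2 = d := by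
  obtain ⟨a, ha⟩ := hx
  have ha0 : 0 < a := by nlinarith [sq_nonneg x]
  obtain ⟨-, -, w, -, -, hw, -⟩ := IsGramThree.of_det_eq_one a q d x 1 0 ha0
    (by linarith) (by linear_combination hbd - d * ha)
  refine ⟨w 0, w 1, w 2, ?_⟩
  rw [← hw, dotProduct, Fin.sum_univ_three]
  ring

theorem Nat.exists_dvd_sq_add_of_jacobiSym_eq_one {p b : ℕ} [Fact p.Prime]
    (h : J(-b | p) = 1) : ∃ x : ℤ, (p : ℤ) ∣ x ^ 2 + b := by
  obtain ⟨y, hy⟩ := ZMod.isSquare_of_jacobiSym_eq_one h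
  obtain ⟨x, rfl⟩ := ZMod.intCast_surjective y
  refine ⟨x, ?_⟩
  rw [← ZMod.intCast_zmod_eq_zero_iff_dvd]
  push_cast at hy ⊢
  rw [sq, ← hy]
  ring

theorem Nat.exists_sum_three_squares_of_mod_four_eq_two {d : ℕ} (hd : d % 4 = 2) :
    ∃ y z w : ℤ, y ^ 2 + z ^ 2 + w ^ 2 = d := by
  have hcop : (d - 1).Coprime (4 * d) := by
    apply Nat.Coprime.mul_right
    · exact (Nat.Coprime.pow_right 2 (by rw [Nat.coprime_two_right]; grind) : (d - 1).Coprime (2 ^ 2))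
    · exact (Nat.coprime_self_sub_left (by omega)).2 (by simp)
  obtain ⟨p, hpd, hp, hmod⟩ :=
    Nat.forall_exists_prime_gt_and_modEq d (q := 4 * d) (a := d - 1) (by omega) hcop
  obtain ⟨j, hj⟩ := (Nat.modEq_iff_dvd' (by omega)).1 hmod.symm
  have hpeq : p + 1 = (4 * j + 1) * d := by
    have : (4 * j + 1) * d = 4 * d * j + d := by ring
    omega
  have : Fact p.Prime := ⟨hp⟩
  have hp4 : p % 4 = 1 := by
    have : (4 * j + 1) * d = 4 * (j * d) + d := by ring
    omega
  have hbodd : Odd (4 * j + 1) := ⟨2 * j, by ring⟩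
  have hpodd : Odd p := Nat.odd_iff.2 (by omega)
  have hJ : J(-(4 * j + 1 : ℕ) | p) = 1 := by
    have hmodb : (p : ℤ) % (4 * j + 1 : ℕ) = -1 % (4 * j + 1 : ℕ) := by
      refine Int.modEq_iff_dvd.2 ⟨-d, ?_⟩
      have : (p : ℤ) + 1 = (4 * j + 1 : ℕ) * d := by exact_mod_cast hpeq
      linear_combination -this
    rw [neg_eq_neg_one_mul, jacobiSym.mul_left, jacobiSym.at_neg_one hpodd,
      ZMod.χ₄_nat_one_mod_four hp4, one_mul,
      jacobiSym.quadratic_reciprocity_one_mod_four (by omega) hpodd,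
      jacobiSym.mod_left' hmodb, jacobiSym.at_neg_one hbodd,
      ZMod.χ₄_nat_one_mod_four (by omega)]
  obtain ⟨x, hx⟩ := Nat.exists_dvd_sq_add_of_jacobiSym_eq_one hJ
  exact Int.exists_sum_three_squares_of_dvd (b := (4 * j + 1 : ℕ)) (by positivity)
    (by exact_mod_cast hp.pos) (by exact_mod_cast hpeq.symm) hx

theorem Nat.jacobiSym_neg_eq_one_of_two_mul_add_one {p b d : ℕ} (hpb : 2 * p + 1 = b * d)
    (hp : Odd p) (hb : b % 8 = 1 ∨ b % 8 = 3) (h : p % 4 = 1 ∨ b % 4 = 3) : J(-b | p) = 1 := by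
  have hbodd : Odd b := Nat.odd_iff.2 (by omega)
  have hpJ : J(p | b) = 1 := by
    have h₁ : J(-2 | b) = 1 := by
      rw [jacobiSym.at_neg_two hbodd, ZMod.χ₈'_nat_eq_if_mod_eight, if_neg (by omega), if_pos hb]
    have h₂ : (-2 * p : ℤ) % b = 1 % b := by
      refine Int.modEq_iff_dvd.2 ⟨d, ?_⟩
      have : (2 * p + 1 : ℤ) = b * d := by exact_mod_cast hpb
      linear_combination this
    rw [← jacobiSym.one_left b, ← jacobiSym.mod_left' h₂, jacobiSym.mul_left, h₁, one_mul]
  rw [neg_eq_neg_one_mul, jacobiSym.mul_left, jacobiSym.at_neg_one hp]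
  rcases Nat.odd_mod_four_iff.1 (Nat.odd_iff.1 hp) with hp4 | hp4
  · rw [ZMod.χ₄_nat_one_mod_four hp4, one_mul,
      jacobiSym.quadratic_reciprocity_one_mod_four' hbodd hp4, hpJ]
  · rw [ZMod.χ₄_nat_three_mod_four hp4,
      jacobiSym.quadratic_reciprocity_three_mod_four (by omega) hp4, hpJ]
    rfl

theorem Nat.exists_sum_three_squares_of_two_mul_add_one {d c e : ℕ} (he : 2 * e + 1 = c * d)
    (heo : Odd e) (hc : c = 1 ∨ c = 3) (h : e % 4 = 1 ∨ c = 3) :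
    ∃ y z w : ℤ, y ^ 2 + z ^ 2 + w ^ 2 = d := by
  have hd0 : 0 < d := Nat.pos_of_ne_zero (by rintro rfl; omega)
  have hcop : e.Coprime (4 * d) := by
    apply Nat.Coprime.mul_right
    · exact (Nat.Coprime.pow_right 2 (Nat.coprime_two_right.2 heo) : e.Coprime (2 ^ 2))
    · refine Nat.Coprime.coprime_mul_left_right (k := c) ?_
      rw [← he]
      simp
  obtain ⟨p, hpe, hp, hmod⟩ :=
    Nat.forall_exists_prime_gt_and_modEq e (q := 4 * d) (a := e) (by omega) hcop
  obtain ⟨j, hj⟩ := (Nat.modEq_iff_dvd' (by omega)).1 hmod.symm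
  have hpj : p = 4 * (d * j) + e := by
    rw [← mul_assoc]
    omega
  have hpeq : 2 * p + 1 = (8 * j + c) * d := by
    rw [hpj]
    linarith
  have : Fact p.Prime := ⟨hp⟩
  have heo' := Nat.odd_iff.1 heo
  have hpodd : Odd p := Nat.odd_iff.2 (by omega)
  obtain ⟨x, hx⟩ := Nat.exists_dvd_sq_add_of_jacobiSym_eq_one <|
    Nat.jacobiSym_neg_eq_one_of_two_mul_add_one hpeq hpodd (by omega) (by omega)
  have hbodd : Odd ((8 * j + c : ℕ) : ℤ) := by
    rw [Int.odd_coe_nat, Nat.odd_iff]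
    omega
  have hpodd' : Odd (p : ℤ) := by exact_mod_cast hpodd
  obtain ⟨x', hx'odd, hx'⟩ : ∃ x' : ℤ, Odd x' ∧ (p : ℤ) ∣ x' ^ 2 + (8 * j + c : ℕ) := by
    rcases Int.even_or_odd x with hxe | hxo
    · refine ⟨x + p, hxe.add_odd hpodd', ?_⟩
      have h := dvd_add hx (dvd_mul_right (p : ℤ) (2 * x + p))
      rwa [show x ^ 2 + (8 * j + c : ℕ) + p * (2 * x + p) = (x + p) ^ 2 + (8 * j + c : ℕ) by ring]
        at h
    · exact ⟨x, hxo, hx⟩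
  have h2p : (2 * p : ℤ) ∣ x' ^ 2 + (8 * j + c : ℕ) :=
    IsCoprime.mul_dvd (by exact_mod_cast Nat.isCoprime_iff_coprime.2 (Nat.coprime_two_left.2 hpodd))
      (hx'odd.pow.add_odd hbodd).two_dvd hx'
  refine Int.exists_sum_three_squares_of_dvd (b := (8 * j + c : ℕ)) ?_ ?_ ?_ h2p
  · have : 0 < 8 * j + c := by omega
    exact_mod_cast this
  · have := hp.pos
    positivity
  · exact_mod_cast hpeq.symm

theorem Nat.exists_sum_three_squares {d : ℕ} (h4 : d % 4 ≠ 0) (h7 : d % 8 ≠ 7) :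
    ∃ y z w : ℤ, y ^ 2 + z ^ 2 + w ^ 2 = d := by
  have : d % 4 = 2 ∨ d % 8 = 3 ∨ d % 8 = 1 ∨ d % 8 = 5 := by omega
  rcases this with h | h | h
  · exact Nat.exists_sum_three_squares_of_mod_four_eq_two h
  · exact Nat.exists_sum_three_squares_of_two_mul_add_one (c := 1) (e := (d - 1) / 2) (by omega)
      (Nat.odd_iff.2 (by omega)) (by omega) (by omega)
  · exact Nat.exists_sum_three_squares_of_two_mul_add_one (c := 3) (e := (3 * d - 1) / 2) (by omega)
      (Nat.odd_iff.2 (by omega)) (by omega) (by omega)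

namespace Quaternion

theorem exists_coordinates_eq (a b c d : ℤ) :
    ∃ q : ℍ[ℤ], q.re = a ∧ q.imI = b ∧ q.imJ = c ∧ q.imK = d :=
  ⟨⟨a, b, c, d⟩, rfl, rfl, rfl, rfl⟩

theorem exists_normSq_eq_natCast (n : ℕ) : ∃ q : ℍ[ℤ], normSq q = n := by
  obtain ⟨a, b, c, d, h⟩ := Nat.sum_four_squares n
  obtain ⟨q, h₀, h₁, h₂, h₃⟩ := exists_coordinates_eq a b c d
  refine ⟨q, ?_⟩
  rw [normSq_def', h₀, h₁, h₂, h₃, ← h]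
  push_cast
  rfl

theorem exists_natCast_mul_eq_mul_of_odd (m : ℕ) {z : ℍ[ℤ]} (h₀ : Odd z.re) (h₁ : Odd z.imI)
    (h₂ : Odd z.imJ) (h₃ : Odd z.imK) :
    ∃ q r : ℍ[ℤ], (m : ℍ[ℤ]) * z = q * r ∧ normSq q = 2 * m := by
  obtain ⟨δ, hδ⟩ := exists_normSq_eq_natCast m
  obtain ⟨k₀, hk₀⟩ := h₀
  obtain ⟨k₁, hk₁⟩ := h₁
  obtain ⟨k₂, hk₂⟩ := h₂
  obtain ⟨k₃, hk₃⟩ := h₃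
  obtain ⟨p, hp₀, hp₁, hp₂, hp₃⟩ := exists_coordinates_eq 1 1 0 0
  obtain ⟨y, hy₀, hy₁, hy₂, hy₃⟩ :=
    exists_coordinates_eq (k₀ + k₁ + 1) (k₁ - k₀) (k₂ + k₃ + 1) (k₃ - k₂)
  have hz : z = p * y := by
    ext <;> simp [*] <;> ring
  have hm : δ * star δ = m := by rw [self_mul_star, hδ, coe_natCast]
  refine ⟨p * δ, star δ * y, ?_, ?_⟩
  · rw [mul_assoc, ← mul_assoc δ, hm, hz, ← mul_assoc, (Nat.cast_commute m p).eq, mul_assoc]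
  · rw [map_mul, hδ, normSq_def', hp₀, hp₁, hp₂, hp₃]
    norm_num

/-- A Lipschitz quaternion whose norm is divisible by `n` has a left factor of norm `n`. -/
theorem exists_eq_mul_of_dvd_normSq (n : ℕ) (hn : 0 < n) (x : ℍ[ℤ]) (hx : (n : ℤ) ∣ normSq x) :
    ∃ q r : ℍ[ℤ], x = q * r ∧ normSq q = n := by
  induction n using Nat.strong_induction_on generalizing x with
  | _ n ih =>
  have hn' : (0 : ℤ) < n := by exact_mod_cast hn
  obtain ⟨k₀, hk₀⟩ := Int.exists_two_mul_abs_add_mul_le x.re hn'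
  obtain ⟨k₁, hk₁⟩ := Int.exists_two_mul_abs_add_mul_le x.imI hn'
  obtain ⟨k₂, hk₂⟩ := Int.exists_two_mul_abs_add_mul_le x.imJ hn'
  obtain ⟨k₃, hk₃⟩ := Int.exists_two_mul_abs_add_mul_le x.imK hn'
  have hsq {t : ℤ} (ht : 2 * |t| ≤ n) : 4 * t ^ 2 ≤ n ^ 2 := by
    rw [← sq_abs t]; nlinarith [abs_nonneg t]
  have hs₀ := hsq hk₀
  have hs₁ := hsq hk₁
  have hs₂ := hsq hk₂
  have hs₃ := hsq hk₃
  obtain ⟨y, hy₀, hy₁, hy₂, hy₃⟩ := exists_coordinates_eq k₀ k₁ k₂ k₃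
  obtain ⟨x', hx'₀, hx'₁, hx'₂, hx'₃⟩ := exists_coordinates_eq
    (x.re + k₀ * n) (x.imI + k₁ * n) (x.imJ + k₂ * n) (x.imK + k₃ * n)
  have hxx' : x = x' - n * y := by
    ext <;> simp [*] <;> ring
  have hN : normSq x' = (x.re + k₀ * n) ^ 2 + (x.imI + k₁ * n) ^ 2 + (x.imJ + k₂ * n) ^ 2 +
      (x.imK + k₃ * n) ^ 2 := by
    rw [normSq_def', hx'₀, hx'₁, hx'₂, hx'₃]
  obtain ⟨e, he⟩ : (n : ℤ) ∣ normSq x' := by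
    obtain ⟨f, hf⟩ := hx
    refine ⟨f + 2 * (x.re * k₀ + x.imI * k₁ + x.imJ * k₂ + x.imK * k₃) +
      n * (k₀ ^ 2 + k₁ ^ 2 + k₂ ^ 2 + k₃ ^ 2), ?_⟩
    rw [normSq_def'] at hf
    rw [hN]
    linear_combination hf
  have he0 : 0 ≤ e := by
    have := normSq_nonneg (a := x')
    rw [he] at this
    exact nonneg_of_mul_nonneg_right this hn'
  have hen : e ≤ n := by nlinarith
  lift e to ℕ using he0
  rcases Nat.eq_zero_or_pos e with rfl | hepos
  · obtain ⟨q, hq⟩ := exists_normSq_eq_natCast n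
    have hx'0 : x' = 0 := normSq_eq_zero.1 (by simpa using he)
    refine ⟨q, -(star q * y), ?_, hq⟩
    rw [mul_neg, ← mul_assoc, self_mul_star, hq, coe_natCast, hxx', hx'0, zero_sub]
  rcases hen.lt_or_eq with hlt | heq
  · obtain ⟨q, r, hqr, hq⟩ := ih e (by exact_mod_cast hlt) hepos (star x')
      ⟨n, by rw [normSq_star, he, mul_comm]⟩
    have hr : normSq r = n := by
      have h := congrArg normSq hqr
      rw [normSq_star, he, map_mul, hq, mul_comm] at h
      exact (mul_left_cancel₀ (by positivity) h).symm
    have hx'' : x' = star r * star q := by rw [← star_mul, ← hqr, star_star]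
    refine ⟨star r, star q - r * y, ?_, by rw [normSq_star, hr]⟩
    rw [mul_sub, ← mul_assoc, star_mul_self, hr, ← hx'', coe_natCast, ← hxx']
  · rw [heq] at he
    have habs {t : ℤ} (ht : 4 * t ^ 2 = (n : ℤ) ^ 2) : 2 * t = n ∨ 2 * t = -n :=
      sq_eq_sq_iff_eq_or_eq_neg.1 (by linear_combination ht)
    have hr₀ := habs (t := x.re + k₀ * n) (by linarith)
    have hr₁ := habs (t := x.imI + k₁ * n) (by linarith)
    have hr₂ := habs (t := x.imJ + k₂ * n) (by linarith)
    have hr₃ := habs (t := x.imK + k₃ * n) (by linarith)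
    obtain ⟨m, rfl⟩ : ∃ m : ℕ, n = 2 * m := ⟨n / 2, by omega⟩
    have hodd {t k : ℤ} (h : 2 * (t + k * (2 * m : ℕ)) = (2 * m : ℕ) ∨
        2 * (t + k * (2 * m : ℕ)) = -(2 * m : ℕ)) : ∃ z, Odd z ∧ t = m * z := by
      push_cast at h
      rcases h with h | h
      · exact ⟨2 * (-k) + 1, odd_two_mul_add_one _, by linarith⟩
      · exact ⟨2 * (-k - 1) + 1, odd_two_mul_add_one _, by linarith⟩
    obtain ⟨z₀, ho₀, hz₀⟩ := hodd hr₀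
    obtain ⟨z₁, ho₁, hz₁⟩ := hodd hr₁
    obtain ⟨z₂, ho₂, hz₂⟩ := hodd hr₂
    obtain ⟨z₃, ho₃, hz₃⟩ := hodd hr₃
    obtain ⟨z, rfl, rfl, rfl, rfl⟩ := exists_coordinates_eq z₀ z₁ z₂ z₃
    obtain ⟨q, r, hqr, hq⟩ := exists_natCast_mul_eq_mul_of_odd m ho₀ ho₁ ho₂ ho₃
    refine ⟨q, r, ?_, by exact_mod_cast hq⟩
    rw [← hqr]
    ext <;> simp [hz₀, hz₁, hz₂, hz₃]

end Quaternion

/-- The dot product on `ℤ⁴`. -/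
def dot4 (u v : Fin 4 → ℤ) : ℤ :=
  u 0 * v 0 + u 1 * v 1 + u 2 * v 2 + u 3 * v 3

/-- if `a, c > 0` and `d = ac − b²` is positive, squarefree and
`d mod 8 ≠ 7`, then the binary quadratic form `ax² + 2bxy + cy²` is represented
by the sum of four squares: there are `u, v ∈ ℤ⁴` with Gram matrix
`[[a, b], [b, c]]`. -/
theorem binary_form_represented_by_four_squares (a b c : ℤ)
    (ha : 0 < a) (hc : 0 < c) (hd : 0 < a * c - b ^ 2)
    (hsq : Squarefree (a * c - b ^ 2)) (h7 : (a * c - b ^ 2) % 8 ≠ 7) :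
    ∃ u v : Fin 4 → ℤ, dot4 u u = a ∧ dot4 u v = b ∧ dot4 v v = c := by
  obtain ⟨d, hdn⟩ := Int.eq_ofNat_of_zero_le hd.le
  have h4 : d % 4 ≠ 0 := by
    intro h
    have h2 : (2 : ℤ) * 2 ∣ a * c - b ^ 2 := by
      rw [hdn]
      omega
    exact absurd (Int.isUnit_iff.1 (hsq 2 h2)) (by norm_num)
  obtain ⟨y, z, w, hyzw⟩ := Nat.exists_sum_three_squares h4 (by omega)
  lift a to ℕ using ha.le
  obtain ⟨x, hx₀, hx₁, hx₂, hx₃⟩ := Quaternion.exists_coordinates_eq b y z w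
  have hx : Quaternion.normSq x = a * c := by
    rw [Quaternion.normSq_def', hx₀, hx₁, hx₂, hx₃]
    linear_combination hyzw - hdn
  obtain ⟨q, r, rfl, hq⟩ :=
    Quaternion.exists_eq_mul_of_dvd_normSq a (by exact_mod_cast ha) x ⟨c, hx⟩
  have hr : Quaternion.normSq r = c := by
    rw [map_mul, hq] at hx
    exact mul_left_cancel₀ ha.ne' hx
  rw [Quaternion.re_mul] at hx₀
  rw [Quaternion.normSq_def'] at hq hr
  refine ⟨![q.re, q.imI, q.imJ, q.imK], ![r.re, -r.imI, -r.imJ, -r.imK], ?_, ?_, ?_⟩ <;>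
    simp only [dot4, Matrix.cons_val]
  · linear_combination hq
  · linear_combination hx₀
  · linear_combination hr
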